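/- arXiv:1011.5687 — 8 statements merged into one kernel-verified Lean document; each statement's English description precedes it below -/
import Mathlib

section
/- For every topological space X and propositional letter p: the formula [≠]p → [≠]□p (axiom AT₁) is valid in X if and only if X is a T₁ space, i.e., every one-element subset of X is closed. -/
/-- Bimodal formulas: propositional letters, falsum, implication, box, and
the difference modality `[≠]` (called `dbox` here). -/
inductive BForm : Type
  | var : ℕ → BForm
  | bot : BForm
  | imp : BForm → BForm → BForm
  | box : BForm → BForm
  | dbox : BForm → BForm
  deriving DecidableEq

namespace BForm

/-- Classical negation. -/
def neg (A : BForm) : BForm := imp A bot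

/-- Classical conjunction. -/
def conj (A B : BForm) : BForm := neg (imp A (neg B))

/-- `◇A = ¬□¬A`. -/
def dia (A : BForm) : BForm := neg (box (neg A))

/-- `⟨≠⟩A = ¬[≠]¬A`. -/
def ddia (A : BForm) : BForm := neg (dbox (neg A))

end BForm

/-- Truth at a point of a Kripke model over a frame `(W, R, R_D)`. -/
def ksat {W : Type} (R RD : W → W → Prop) (θ : ℕ → Set W) : W → BForm → Prop
  | x, .var n => x ∈ θ n
  | _, .bot => False
  | x, .imp A B => ksat R RD θ x A → ksat R RD θ x B
  | x, .box A => ∀ y, R x y → ksat R RD θ y A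
  | x, .dbox A => ∀ y, RD x y → ksat R RD θ y A

/-- Validity in a Kripke frame: truth at every point under every valuation. -/
def kvalid {W : Type} (R RD : W → W → Prop) (A : BForm) : Prop :=
  ∀ (θ : ℕ → Set W) (x : W), ksat R RD θ x A

/-- Truth at a point of a topological model. -/
def tsat {X : Type} [TopologicalSpace X] (θ : ℕ → Set X) : X → BForm → Prop
  | x, .var n => x ∈ θ n
  | _, .bot => False
  | x, .imp A B => tsat θ x A → tsat θ x B
  | x, .box A => ∃ U : Set X, IsOpen U ∧ x ∈ U ∧ ∀ y ∈ U, tsat θ y A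
  | x, .dbox A => ∀ y, y ≠ x → tsat θ y A

/-- Validity in a topological space. -/
def tvalid (X : Type) [TopologicalSpace X] (A : BForm) : Prop :=
  ∀ (θ : ℕ → Set X) (x : X), tsat θ x A

/-- Uniform substitution of formulas for propositional letters. -/
def substF (σ : ℕ → BForm) : BForm → BForm
  | .var n => σ n
  | .bot => .bot
  | .imp A B => .imp (substF σ A) (substF σ B)
  | .box A => .box (substF σ A)
  | .dbox A => .dbox (substF σ A)

/-- Boolean evaluation of a formula, treating letters and modal formulas as atoms. -/
def beval (v : BForm → Bool) : BForm → Bool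
  | .var n => v (.var n)
  | .bot => false
  | .imp A B => !(beval v A) || beval v B
  | .box A => v (.box A)
  | .dbox A => v (.dbox A)

/-- A classical tautology of the bimodal language. -/
def Tautology (A : BForm) : Prop := ∀ v : BForm → Bool, beval v A = true

/-- The letter `p`. -/
def pLet : BForm := .var 0
/-- The letter `q`. -/
def qLet : BForm := .var 1

/-- The least bimodal logic containing `K₂`, the S4D axioms and the extra axioms `Ax`,
closed under modus ponens, uniform substitution, and both necessitation rules. -/
inductive Logic (Ax : Set BForm) : BForm → Prop
  | taut {A : BForm} : Tautology A → Logic Ax A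
  | axKBox : Logic Ax (.imp (.box (.imp pLet qLet)) (.imp (.box pLet) (.box qLet)))
  | axKD : Logic Ax (.imp (.dbox (.imp pLet qLet)) (.imp (.dbox pLet) (.dbox qLet)))
  | axBD : Logic Ax (.imp pLet (.dbox (BForm.ddia pLet)))
  | ax4mD : Logic Ax (.imp (BForm.conj pLet (.dbox pLet)) (.dbox (.dbox pLet)))
  | axTBox : Logic Ax (.imp (.box pLet) pLet)
  | ax4Box : Logic Ax (.imp (.box pLet) (.box (.box pLet)))
  | axDBox : Logic Ax (.imp (BForm.conj (.dbox pLet) pLet) (.box pLet))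
  | extra {A : BForm} : A ∈ Ax → Logic Ax A
  | mp {A B : BForm} : Logic Ax (.imp A B) → Logic Ax A → Logic Ax B
  | subst {A : BForm} (σ : ℕ → BForm) : Logic Ax A → Logic Ax (substF σ A)
  | necBox {A : BForm} : Logic Ax A → Logic Ax (.box A)
  | necD {A : BForm} : Logic Ax A → Logic Ax (.dbox A)

/-- The axiom (DS): `[≠]p → ◇p`. -/
def dsAx : BForm := .imp (.dbox pLet) (BForm.dia pLet)

/-- The axiom (AT₁): `[≠]p → [≠]□p`. -/
def at1Ax : BForm := .imp (.dbox pLet) (.dbox (.box pLet))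

/-- The logic S4D. -/
def S4D : BForm → Prop := Logic ∅

/-- The logic S4DS = S4D + (DS). -/
def S4DS : BForm → Prop := Logic {dsAx}

/-- The logic S4DT1S = S4DS + (AT₁). -/
def S4DT1S : BForm → Prop := Logic {dsAx, at1Ax}

/-- `(W, R, R_D)` is an S4D-frame: `R` is reflexive and transitive, `R_D` is
symmetric and pseudo-transitive, and `R ⊆ R_D ∪ Id`. -/
structure IsS4DFrame {W : Type} (R RD : W → W → Prop) : Prop where
  refl : ∀ x, R x x
  trans : ∀ ⦃x y z⦄, R x y → R y z → R x z
  symm : ∀ ⦃x y⦄, RD x y → RD y x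
  ptrans : ∀ ⦃x y z⦄, RD x y → RD y z → x ≠ z → RD x z
  inc : ∀ ⦃x y⦄, R x y → RD x y ∨ x = y

/-- A T₁-frame: every `R_D`-irreflexive point is `R`-minimal. -/
def IsT1Frame {W : Type} (R RD : W → W → Prop) : Prop :=
  ∀ x, ¬ RD x x → ∀ y, R y x → y = x

/-- A DS-frame: every `R_D`-irreflexive point has an `R`-successor distinct from itself. -/
def IsDSFrame {W : Type} (R RD : W → W → Prop) : Prop :=
  ∀ x, ¬ RD x x → ∃ y, y ≠ x ∧ R x y

/-- A cd-p-morphism from a topological space `X` onto a Kripke frame `(W, R, R_D)`. -/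
structure IsCdPMorphism {X : Type} [TopologicalSpace X] {W : Type}
    (R RD : W → W → Prop) (f : X → W) : Prop where
  surj : Function.Surjective f
  cl : ∀ w : W, closure (f ⁻¹' {w}) = f ⁻¹' {v | R v w}
  diff : ∀ w : W, {x : X | ∃ y, y ≠ x ∧ f y = w} = f ⁻¹' {v | RD v w}

/-- A p-morphism between Kripke frames. -/
structure IsPMorphism {W W' : Type} (R RD : W → W → Prop) (R' RD' : W' → W' → Prop)
    (f : W → W') : Prop where
  surj : Function.Surjective f
  forth : ∀ ⦃x y⦄, R x y → R' (f x) (f y)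
  forthD : ∀ ⦃x y⦄, RD x y → RD' (f x) (f y)
  back : ∀ x z, R' (f x) z → ∃ y, R x y ∧ f y = z
  backD : ∀ x z, RD' (f x) z → ∃ y, RD x y ∧ f y = z

/-- The Alexandrov topology on `W` whose open sets are the `R`-upward-closed sets. -/
def alexandrov {W : Type} (R : W → W → Prop) : TopologicalSpace W where
  IsOpen U := ∀ ⦃x⦄, x ∈ U → ∀ ⦃y⦄, R x y → y ∈ U
  isOpen_univ := fun _ _ _ _ => trivial
  isOpen_inter := fun _ _ hU hV x hx y hxy => ⟨hU hx.1 hxy, hV hx.2 hxy⟩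
  isOpen_sUnion := fun _ hS x hx y hxy => by
    obtain ⟨U, hU, hxU⟩ := hx
    exact ⟨U, hU, hS U hU hxU hxy⟩

/-- The axiom (AT₁) `[≠]p → [≠]□p` is valid in a topological space `X`
iff `X` is a T₁ space (every singleton is closed). -/
theorem at1_valid_iff_t1 (X : Type) [TopologicalSpace X] (n : ℕ) :
    tvalid X (.imp (.dbox (.var n)) (.dbox (.box (.var n)))) ↔
      ∀ x : X, IsClosed ({x} : Set X) := by
  constructor
  · intro h x
    rw [← isOpen_compl_iff, isOpen_iff_forall_mem_open]
    intro y hy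
    -- With `p` true exactly off `x`, the premise `[≠]p` holds at `x`, so `□p` holds at `y ≠ x`.
    obtain ⟨U, hU, hyU, hUx⟩ := h (fun _ => {x}ᶜ) x (fun _ hz => hz) y hy
    exact ⟨U, hUx, hU, hyU⟩
  · intro h θ x hp y hy
    -- The open set `{x}ᶜ` is a neighbourhood of every `y ≠ x` on which `p` holds.
    exact ⟨{x}ᶜ, (h x).isOpen_compl, hy, hp⟩
end

section
/- For every topological space X and propositional letter p: the formula [≠]p → ◇p (axiom DS) is valid in X if and only if X is dense-in-itself, i.e., X has no isolated points (no singleton {x} is open). -/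
/-- The axiom (DS) `[≠]p → ◇p` is valid in a topological space `X`
iff `X` is dense-in-itself (no singleton is open). -/
theorem ds_valid_iff_dense_in_itself (X : Type) [TopologicalSpace X] (n : ℕ) :
    tvalid X (.imp (.dbox (.var n)) (BForm.dia (.var n))) ↔
      ∀ x : X, ¬ IsOpen ({x} : Set X) := by
  constructor
  · intro h x hx
    -- At an isolated point `x`, the valuation `p ↦ {x}ᶜ` refutes the formula.
    exact h (fun _ => {x}ᶜ) x (fun y hy => hy) ⟨{x}, hx, rfl, fun y hy hyp => hyp hy⟩
  · rintro h θ x hD ⟨U, hU, hxU, hUp⟩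
    -- `p` holds off `x` and fails throughout `U`, so `U = {x}`.
    have hUx : U = {x} := Set.Subset.antisymm
      (fun y hy => by_contra fun hne => hUp y hy (hD y hne))
      (Set.singleton_subset_iff.mpr hxU)
    exact h x (hUx ▸ hU)
end

section
/- Let F = (W, R, R_D) be an S4D-frame and p a propositional letter. Then F ⊨ [≠]p → [≠]□p (axiom AT₁) if and only if F is a T₁-frame, i.e., every R_D-irreflexive point x (a point with not xR_Dx) is R-minimal (yRx implies y = x). -/
/-- An S4D-frame validates (AT₁) `[≠]p → [≠]□p` iff it is a T₁-frame. -/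
theorem at1_frame_valid_iff_t1frame {W : Type} (R RD : W → W → Prop)
    (hF : IsS4DFrame R RD) (n : ℕ) :
    kvalid R RD (.imp (.dbox (.var n)) (.dbox (.box (.var n)))) ↔ IsT1Frame R RD := by
  constructor
  · intro h x hx y hyx
    by_contra hne
    have hxy : RD x y := hF.symm ((hF.inc hyx).resolve_right hne)
    -- The least valuation making `[≠]p` true at `x`.
    exact hx (h (fun _ => {z | RD x z}) x (fun _ hz => hz) y hxy x hyx)
  · intro h θ x hx y hxy z hyz
    -- It suffices that `z` is an `R_D`-successor of `x`.
    refine hx z ?_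
    by_cases hxz : x = z
    · subst hxz
      by_contra hirr
      exact hirr (h x hirr y hyz ▸ hxy)
    · rcases hF.inc hyz with hD | rfl
      · exact hF.ptrans hxy hD hxz
      · exact hxy
end

section
/- Let F = (W, R, R_D) be an S4D-frame and p a propositional letter. Then F ⊨ [≠]p → ◇p (axiom DS) if and only if F is a DS-frame, i.e., every R_D-irreflexive point x (a point with not xR_Dx) has an R-successor distinct from itself (there exists y ≠ x with xRy). -/
/-- An S4D-frame validates (DS) `[≠]p → ◇p` iff it is a DS-frame. -/
theorem ds_frame_valid_iff_dsframe {W : Type} (R RD : W → W → Prop)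
    (hF : IsS4DFrame R RD) (n : ℕ) :
    kvalid R RD (.imp (.dbox (.var n)) (BForm.dia (.var n))) ↔ IsDSFrame R RD := by
  constructor
  · intro h x hx
    -- Evaluate `p` as the set of `R_D`-successors of `x`: then `[≠]p` holds at `x`, and the
    -- `R`-successor satisfying `p` differs from `x` because `x` is `R_D`-irreflexive.
    by_contra hne
    refine h (fun _ => {y | RD x y}) x (fun y hy => hy) (fun y hxy hy => hne ⟨y, ?_, hxy⟩)
    rintro rfl
    exact hx hy
  · intro h θ x hd hb
    by_cases hx : RD x x
    · exact hb x (hF.refl x) (hd x hx)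
    · obtain ⟨y, hyx, hxy⟩ := h x hx
      -- `y ≠ x` is an `R`-successor of `x`, hence an `R_D`-successor, so `p` holds there.
      exact hb y hxy (hd y ((hF.inc hxy).resolve_right (Ne.symm hyx)))
end

section
/- Kripke completeness: for every bimodal formula A, (i) A ∈ S4D if and only if F ⊨ A for every S4D-frame F; (ii) A ∈ S4DS if and only if F ⊨ A for every S4D-frame F that is a DS-frame; (iii) A ∈ S4DT1S if and only if F ⊨ A for every S4D-frame F that is both a DS-frame and a T₁-frame. -/
/-! ### Soundness -/

theorem ksat_substF {W : Type} (R RD : W → W → Prop) (θ : ℕ → Set W) (σ : ℕ → BForm)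
    (A : BForm) : ∀ x, ksat R RD θ x (substF σ A) ↔
      ksat R RD (fun n => {y | ksat R RD θ y (σ n)}) x A := by
  induction A with
  | var n => intro x; rfl
  | bot => intro x; rfl
  | imp A B ihA ihB => intro x; simp only [substF, ksat, ihA, ihB]
  | box A ih => intro x; simp only [substF, ksat, ih]
  | dbox A ih => intro x; simp only [substF, ksat, ih]

theorem ksat_of_tautology {W : Type} (R RD : W → W → Prop) (θ : ℕ → Set W) (x : W)
    {A : BForm} (hA : Tautology A) : ksat R RD θ x A := by
  classical
  have key : ∀ B, beval (fun C => decide (ksat R RD θ x C)) B = true ↔ ksat R RD θ x B := by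
    intro B
    induction B with
    | var n => simp [beval]
    | bot => simp [beval, ksat]
    | imp B C ihB ihC =>
      simp only [beval, ksat, ← ihB, ← ihC]
      cases beval (fun C => decide (ksat R RD θ x C)) B <;> simp
    | box B _ => simp [beval]
    | dbox B _ => simp [beval]
  exact (key A).1 (hA _)

theorem ksat_neg {W : Type} {R RD : W → W → Prop} {θ : ℕ → Set W} {x : W} {A : BForm} :
    ksat R RD θ x A.neg ↔ ¬ ksat R RD θ x A := Iff.rfl

theorem ksat_conj {W : Type} {R RD : W → W → Prop} {θ : ℕ → Set W} {x : W} {A B : BForm} :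
    ksat R RD θ x (A.conj B) ↔ ksat R RD θ x A ∧ ksat R RD θ x B := by
  simp only [BForm.conj, ksat_neg, ksat]
  tauto

theorem ksat_dia {W : Type} {R RD : W → W → Prop} {θ : ℕ → Set W} {x : W} {A : BForm} :
    ksat R RD θ x A.dia ↔ ∃ y, R x y ∧ ksat R RD θ y A := by
  simp [BForm.dia, ksat_neg, ksat]

theorem ksat_ddia {W : Type} {R RD : W → W → Prop} {θ : ℕ → Set W} {x : W} {A : BForm} :
    ksat R RD θ x A.ddia ↔ ∃ y, RD x y ∧ ksat R RD θ y A := by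
  simp [BForm.ddia, ksat_neg, ksat]

theorem soundness {W : Type} {R RD : W → W → Prop} (hF : IsS4DFrame R RD) {Ax : Set BForm}
    (hAx : ∀ B ∈ Ax, kvalid R RD B) {A : BForm} (hA : Logic Ax A) : kvalid R RD A := by
  induction hA with
  | taut h => exact fun θ x => ksat_of_tautology R RD θ x h
  | axKBox => exact fun θ x h1 h2 y hy => h1 y hy (h2 y hy)
  | axKD => exact fun θ x h1 h2 y hy => h1 y hy (h2 y hy)
  | axBD => exact fun θ x hp y hy => ksat_ddia.2 ⟨x, hF.symm hy, hp⟩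
  | ax4mD =>
    intro θ x h y hy z hz
    obtain ⟨h1, h2⟩ := ksat_conj.1 h
    by_cases hxz : x = z
    · exact hxz ▸ h1
    · exact h2 z (hF.ptrans hy hz hxz)
  | axTBox => exact fun θ x h => h x (hF.refl x)
  | ax4Box => exact fun θ x h y hy z hz => h z (hF.trans hy hz)
  | axDBox =>
    intro θ x h y hy
    obtain ⟨h1, h2⟩ := ksat_conj.1 h
    rcases hF.inc hy with h | rfl
    · exact h1 y h
    · exact h2
  | extra h => exact hAx _ h
  | mp _ _ ih1 ih2 => exact fun θ x => ih1 θ x (ih2 θ x)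
  | subst σ _ ih => exact fun θ x => (ksat_substF R RD θ σ _ x).2 (ih _ x)
  | necBox _ ih => exact fun θ x y _ => ih θ y
  | necD _ ih => exact fun θ x y _ => ih θ y

theorem kvalid_dsAx {W : Type} {R RD : W → W → Prop} (hF : IsS4DFrame R RD)
    (hDS : IsDSFrame R RD) : kvalid R RD dsAx := by
  intro θ x h
  refine ksat_dia.2 ?_
  by_cases hx : RD x x
  · exact ⟨x, hF.refl x, h x hx⟩
  · obtain ⟨y, hne, hy⟩ := hDS x hx
    rcases hF.inc hy with hD | rfl
    · exact ⟨y, hy, h y hD⟩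
    · exact absurd rfl hne

theorem kvalid_at1Ax {W : Type} {R RD : W → W → Prop} (hF : IsS4DFrame R RD)
    (hT : IsT1Frame R RD) : kvalid R RD at1Ax := by
  intro θ x h y hy z hz
  refine h z ?_
  by_cases hxz : x = z
  · subst hxz
    by_contra hx
    exact hx (hT x hx y hz ▸ hy)
  · rcases hF.inc hz with hD | rfl
    · exact hF.ptrans hy hD hxz
    · exact hy

/-! ### Derivations from hypotheses and the Lindenbaum lemma -/

/-- Derivability of a formula from a set of hypotheses: theorems of the logic and hypotheses,
closed under modus ponens only, so that necessitation applies to theorems alone. -/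
inductive Der (Ax Γ : Set BForm) : BForm → Prop
  | thm {A : BForm} : Logic Ax A → Der Ax Γ A
  | hyp {A : BForm} : A ∈ Γ → Der Ax Γ A
  | mp {A B : BForm} : Der Ax Γ (.imp A B) → Der Ax Γ A → Der Ax Γ B

/-- A maximal consistent set of formulas, described by the closure properties used in the
canonical model. -/
structure Mcs (Ax x : Set BForm) : Prop where
  thm : ∀ {A}, Logic Ax A → A ∈ x
  mp : ∀ {A B}, BForm.imp A B ∈ x → A ∈ x → B ∈ x
  bot : BForm.bot ∉ x
  em : ∀ A, A ∈ x ∨ A.neg ∈ x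

theorem taut_self (A : BForm) : Tautology (.imp A A) := by
  intro v; simp only [beval]; cases beval v A <;> rfl

theorem taut_k (A B : BForm) : Tautology (.imp A (.imp B A)) := by
  intro v; simp only [beval]; cases beval v A <;> cases beval v B <;> rfl

theorem taut_s (A B C : BForm) :
    Tautology (.imp (.imp A (.imp B C)) (.imp (.imp A B) (.imp A C))) := by
  intro v; simp only [beval]
  cases beval v A <;> cases beval v B <;> cases beval v C <;> rfl

theorem taut_cases (A B : BForm) :
    Tautology (.imp (.imp A B) (.imp (.imp A.neg B) B)) := by
  intro v; simp only [beval, BForm.neg]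
  cases beval v A <;> cases beval v B <;> rfl

theorem taut_efq (A : BForm) : Tautology (.imp .bot A) := by
  intro v; simp [beval]

theorem taut_neg_imp (A B : BForm) : Tautology (.imp A.neg (.imp A B)) := by
  intro v; simp only [beval, BForm.neg]
  cases beval v A <;> cases beval v B <;> rfl

theorem taut_conj_intro (A B : BForm) : Tautology (.imp A (.imp B (A.conj B))) := by
  intro v; simp only [beval, BForm.neg, BForm.conj]
  cases beval v A <;> cases beval v B <;> rfl

/-- Used to combine two implications whose antecedents come from the same theory. -/
theorem taut_combine (B C A D : BForm) :
    Tautology (.imp (.imp B (.imp A D)) (.imp (.imp C A) (.imp (B.conj C) D))) := by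
  intro v; simp only [beval, BForm.neg, BForm.conj]
  cases beval v A <;> cases beval v B <;> cases beval v C <;> cases beval v D <;> rfl

section Canonical

variable {Ax : Set BForm}

theorem Der.deduction {Γ : Set BForm} {A B : BForm} (h : Der Ax (insert A Γ) B) :
    Der Ax Γ (.imp A B) := by
  induction h with
  | thm h => exact .mp (.thm (.taut (taut_k _ _))) (.thm h)
  | hyp h =>
    rcases h with rfl | h
    · exact .thm (.taut (taut_self _))
    · exact .mp (.thm (.taut (taut_k _ _))) (.hyp h)
  | mp _ _ ih1 ih2 => exact .mp (.mp (.thm (.taut (taut_s _ _ _))) ih1) ih2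

theorem Der.mono {Γ Δ : Set BForm} (hs : Γ ⊆ Δ) {A : BForm} (h : Der Ax Γ A) : Der Ax Δ A := by
  induction h with
  | thm h => exact .thm h
  | hyp h => exact .hyp (hs h)
  | mp _ _ ih1 ih2 => exact .mp ih1 ih2

theorem Der.of_chain {c : Set (Set BForm)} (hc : IsChain (· ⊆ ·) c) (hne : c.Nonempty)
    {A : BForm} (h : Der Ax (⋃₀ c) A) : ∃ Γ ∈ c, Der Ax Γ A := by
  induction h with
  | thm h => exact ⟨_, hne.some_mem, .thm h⟩
  | hyp h =>
    obtain ⟨Γ, hΓ, hA⟩ := h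
    exact ⟨Γ, hΓ, .hyp hA⟩
  | mp _ _ ih1 ih2 =>
    obtain ⟨Γ, hΓ, h1⟩ := ih1
    obtain ⟨Δ, hΔ, h2⟩ := ih2
    rcases hc.total hΓ hΔ with hs | hs
    · exact ⟨Δ, hΔ, .mp (h1.mono hs) h2⟩
    · exact ⟨Γ, hΓ, .mp h1 (h2.mono hs)⟩

theorem lindenbaum {Γ : Set BForm} {A : BForm} (h : ¬ Der Ax Γ A) :
    ∃ x, Mcs Ax x ∧ Γ ⊆ x ∧ A ∉ x := by
  obtain ⟨M, hΓM, hM⟩ := zorn_subset_nonempty {Δ : Set BForm | ¬ Der Ax Δ A}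
    (fun c hc hchain hne => ⟨⋃₀ c, fun hd => by
      obtain ⟨Δ, hΔ, hd'⟩ := hd.of_chain hchain hne
      exact hc hΔ hd', fun s hs => Set.subset_sUnion_of_mem hs⟩) Γ h
  have hMA : ¬ Der Ax M A := hM.prop
  have ext : ∀ B, B ∉ M → Der Ax M (.imp B A) := by
    intro B hB
    by_contra hcon
    exact hB (hM.le_of_ge (y := insert B M) (fun hd => hcon hd.deduction)
      (Set.subset_insert _ _) (Set.mem_insert _ _))
  have closed : ∀ B, Der Ax M B → B ∈ M := by
    intro B hB
    by_contra hn
    exact hMA (.mp (ext B hn) hB)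
  refine ⟨M, ⟨fun h => closed _ (.thm h), fun h1 h2 => closed _ (.mp (.hyp h1) (.hyp h2)),
    fun hb => hMA (.mp (.thm (.taut (taut_efq A))) (.hyp hb)), fun B => ?_⟩, hΓM,
    fun hA => hMA (.hyp hA)⟩
  by_contra! hn
  exact hMA (.mp (.mp (.thm (.taut (taut_cases B A))) (ext _ hn.1)) (ext _ hn.2))

/-! ### Instances of the axioms -/

/-- The substitution sending `p` to `A` and every other letter, in particular `q`, to `B`. -/
def sub2 (A B : BForm) : ℕ → BForm
  | 0 => A
  | _ => B

theorem inst_KBox (A B : BForm) :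
    Logic Ax (.imp (.box (.imp A B)) (.imp (.box A) (.box B))) :=
  Logic.subst (sub2 A B) .axKBox

theorem inst_KD (A B : BForm) :
    Logic Ax (.imp (.dbox (.imp A B)) (.imp (.dbox A) (.dbox B))) :=
  Logic.subst (sub2 A B) .axKD

theorem inst_BD (A : BForm) : Logic Ax (.imp A (.dbox A.ddia)) :=
  Logic.subst (sub2 A A) .axBD

theorem inst_4mD (A : BForm) : Logic Ax (.imp (A.conj (.dbox A)) (.dbox (.dbox A))) :=
  Logic.subst (sub2 A A) .ax4mD

theorem inst_TBox (A : BForm) : Logic Ax (.imp (.box A) A) :=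
  Logic.subst (sub2 A A) .axTBox

theorem inst_4Box (A : BForm) : Logic Ax (.imp (.box A) (.box (.box A))) :=
  Logic.subst (sub2 A A) .ax4Box

theorem inst_DBox (A : BForm) : Logic Ax (.imp (BForm.conj (.dbox A) A) (.box A)) :=
  Logic.subst (sub2 A A) .axDBox

theorem inst_DS (h : dsAx ∈ Ax) (A : BForm) : Logic Ax (.imp (.dbox A) A.dia) :=
  Logic.subst (sub2 A A) (.extra h)

theorem inst_AT1 (h : at1Ax ∈ Ax) (A : BForm) : Logic Ax (.imp (.dbox A) (.dbox (.box A))) :=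
  Logic.subst (sub2 A A) (.extra h)

/-! ### The canonical frame -/

namespace Mcs

variable {x : Set BForm}

theorem mem_neg (hx : Mcs Ax x) {A : BForm} : A.neg ∈ x ↔ A ∉ x :=
  ⟨fun h hA => hx.bot (hx.mp h hA), fun h => (hx.em A).resolve_left h⟩

theorem mem_imp (hx : Mcs Ax x) {A B : BForm} : BForm.imp A B ∈ x ↔ (A ∈ x → B ∈ x) := by
  refine ⟨hx.mp, fun h => ?_⟩
  by_cases hA : A ∈ x
  · exact hx.mp (hx.thm (.taut (taut_k B A))) (h hA)
  · exact hx.mp (hx.thm (.taut (taut_neg_imp A B))) (hx.mem_neg.2 hA)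

theorem mem_conj (hx : Mcs Ax x) {A B : BForm} : A.conj B ∈ x ↔ A ∈ x ∧ B ∈ x := by
  simp only [BForm.conj, hx.mem_neg, hx.mem_imp]
  tauto

theorem mem_box_mp (hx : Mcs Ax x) {A B : BForm} (h : (BForm.imp A B).box ∈ x)
    (hA : A.box ∈ x) : B.box ∈ x :=
  hx.mp (hx.mp (hx.thm (inst_KBox A B)) h) hA

theorem mem_dbox_mp (hx : Mcs Ax x) {A B : BForm} (h : (BForm.imp A B).dbox ∈ x)
    (hA : A.dbox ∈ x) : B.dbox ∈ x :=
  hx.mp (hx.mp (hx.thm (inst_KD A B)) h) hA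

theorem box_of_der (hx : Mcs Ax x) {B : BForm} (h : Der Ax {A | A.box ∈ x} B) : B.box ∈ x := by
  induction h with
  | thm h => exact hx.thm (.necBox h)
  | hyp h => exact h
  | mp _ _ ih1 ih2 => exact hx.mem_box_mp ih1 ih2

theorem dbox_of_der (hx : Mcs Ax x) {B : BForm} (h : Der Ax {A | A.dbox ∈ x} B) :
    B.dbox ∈ x := by
  induction h with
  | thm h => exact hx.thm (.necD h)
  | hyp h => exact h
  | mp _ _ ih1 ih2 => exact hx.mem_dbox_mp ih1 ih2

/-- A derivation from the union of the box-content and the `[≠]`-content of `x` can be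
collected into a single implication: its antecedent is in the `[≠]`-content and the
implication itself is in the box-content. -/
theorem split_of_der (hx : Mcs Ax x) {C : BForm}
    (h : Der Ax ({A | A.box ∈ x} ∪ {A | A.dbox ∈ x}) C) :
    ∃ B : BForm, B.dbox ∈ x ∧ (BForm.imp B C).box ∈ x := by
  have top : (BForm.imp .bot .bot).dbox ∈ x := hx.thm (.necD (.taut (taut_self _)))
  induction h with
  | thm h => exact ⟨_, top, hx.thm (.necBox (.mp (.taut (taut_k _ _)) h))⟩
  | hyp h =>
    rcases h with h | h
    · exact ⟨_, top, hx.mem_box_mp (hx.thm (.necBox (.taut (taut_k _ _)))) h⟩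
    · exact ⟨_, h, hx.thm (.necBox (.taut (taut_self _)))⟩
  | mp _ _ ih1 ih2 =>
    obtain ⟨B, hB, h1⟩ := ih1
    obtain ⟨D, hD, h2⟩ := ih2
    exact ⟨B.conj D,
      hx.mem_dbox_mp (hx.mem_dbox_mp (hx.thm (.necD (.taut (taut_conj_intro B D)))) hB) hD,
      hx.mem_box_mp (hx.mem_box_mp (hx.thm (.necBox (.taut (taut_combine _ _ _ _)))) h1) h2⟩

end Mcs

/-- Points of the canonical frame: the maximal consistent sets of the logic. -/
def CW (Ax : Set BForm) : Type := {x : Set BForm // Mcs Ax x}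

/-- The canonical accessibility relation of `□`. -/
def CR (x y : CW Ax) : Prop := ∀ A : BForm, A.box ∈ x.1 → A ∈ y.1

/-- The canonical accessibility relation of `[≠]`. -/
def CRD (x y : CW Ax) : Prop := ∀ A : BForm, A.dbox ∈ x.1 → A ∈ y.1

theorem CRD.symm {x y : CW Ax} (h : CRD x y) : CRD y x := by
  intro A hA
  by_contra hn
  have h1 : A.neg.ddia ∈ y.1 :=
    h _ (x.2.mp (x.2.thm (inst_BD A.neg)) (x.2.mem_neg.2 hn))
  -- `⟨≠⟩¬A` reads `¬[≠]¬¬A`, so the double negation has to be introduced under `[≠]`.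
  refine y.2.mem_neg.1 h1 (y.2.mem_dbox_mp (y.2.thm (.necD (.taut ?_))) hA)
  intro v
  simp only [beval, BForm.neg]
  cases beval v A <;> rfl

theorem exists_separating {x z : CW Ax} (h : x ≠ z) : ∃ B, B ∈ x.1 ∧ B ∉ z.1 := by
  by_contra! hcon
  refine h (Subtype.ext (Set.Subset.antisymm hcon fun B hB => ?_))
  by_contra hn
  exact z.2.mem_neg.1 (hcon _ (x.2.mem_neg.2 hn)) hB

theorem canonical_frame : IsS4DFrame (CR (Ax := Ax)) CRD where
  refl x A hA := x.2.mp (x.2.thm (inst_TBox A)) hA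
  trans x y z hxy hyz A hA := hyz A (hxy _ (x.2.mp (x.2.thm (inst_4Box A)) hA))
  symm _ _ h := h.symm
  ptrans x y z hxy hyz hne A hA := by
    obtain ⟨B, hBx, hBz⟩ := exists_separating hne
    -- `¬B → A` holds at `x` and at every `[≠]`-successor of `x`.
    have h1 : BForm.imp B.neg A ∈ x.1 :=
      x.2.mem_imp.2 fun h => absurd hBx (x.2.mem_neg.1 h)
    have h2 : (BForm.imp B.neg A).dbox ∈ x.1 :=
      x.2.mem_dbox_mp (x.2.thm (.necD (.taut (taut_k A B.neg)))) hA
    have h3 := x.2.mp (x.2.thm (inst_4mD (BForm.imp B.neg A))) (x.2.mem_conj.2 ⟨h1, h2⟩)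
    exact z.2.mp (hyz _ (hxy _ h3)) (z.2.mem_neg.2 hBz)
  inc x y hxy := by
    by_contra! hcon
    obtain ⟨hD, hne⟩ := hcon
    obtain ⟨B, hBx, hBy⟩ := exists_separating hne
    simp only [CRD, not_forall] at hD
    obtain ⟨A, hA, hAy⟩ := hD
    have h1 : BForm.imp B.neg A ∈ x.1 :=
      x.2.mem_imp.2 fun h => absurd hBx (x.2.mem_neg.1 h)
    have h2 : (BForm.imp B.neg A).dbox ∈ x.1 :=
      x.2.mem_dbox_mp (x.2.thm (.necD (.taut (taut_k A B.neg)))) hA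
    have h3 := x.2.mp (x.2.thm (inst_DBox (BForm.imp B.neg A))) (x.2.mem_conj.2 ⟨h2, h1⟩)
    exact hAy (y.2.mp (hxy _ h3) (y.2.mem_neg.2 hBy))

theorem canonical_ds (h : dsAx ∈ Ax) : IsDSFrame (CR (Ax := Ax)) CRD := by
  intro x hx
  have hcons : ¬ Der Ax ({A | A.box ∈ x.1} ∪ {A | A.dbox ∈ x.1}) .bot := by
    intro hd
    obtain ⟨B, hB, hnB⟩ := x.2.split_of_der hd
    exact x.2.mem_neg.1 (x.2.mp (x.2.thm (inst_DS h B)) hB) hnB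
  obtain ⟨y, hy, hsub, -⟩ := lindenbaum hcons
  refine ⟨⟨y, hy⟩, ?_, fun A hA => hsub (Or.inl hA)⟩
  rintro rfl
  exact hx fun A hA => hsub (Or.inr hA)

theorem canonical_t1 (h : at1Ax ∈ Ax) : IsT1Frame (CR (Ax := Ax)) CRD := by
  intro x hx y hyx
  by_contra hne
  have hxy : CRD x y := ((canonical_frame.inc hyx).resolve_right hne).symm
  exact hx fun A hA => hyx A (hxy _ (x.2.mp (x.2.thm (inst_AT1 h A)) hA))

theorem truth_lemma (A : BForm) : ∀ x : CW Ax,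
    ksat CR CRD (fun n => {y : CW Ax | BForm.var n ∈ y.1}) x A ↔ A ∈ x.1 := by
  induction A with
  | var n => intro x; rfl
  | bot => exact fun x => ⟨False.elim, x.2.bot⟩
  | imp A B ihA ihB => intro x; simp only [ksat, ihA, ihB, x.2.mem_imp]
  | box A ih =>
    intro x
    simp only [ksat, ih]
    refine ⟨fun h => ?_, fun h y hy => hy A h⟩
    by_contra hn
    obtain ⟨y, hy, hsub, hAy⟩ := lindenbaum fun hd => hn (x.2.box_of_der hd)
    exact hAy (h ⟨y, hy⟩ fun B hB => hsub hB)
  | dbox A ih =>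
    intro x
    simp only [ksat, ih]
    refine ⟨fun h => ?_, fun h y hy => hy A h⟩
    by_contra hn
    obtain ⟨y, hy, hsub, hAy⟩ := lindenbaum fun hd => hn (x.2.dbox_of_der hd)
    exact hAy (h ⟨y, hy⟩ fun B hB => hsub hB)

theorem Der.of_empty {A : BForm} (h : Der Ax ∅ A) : Logic Ax A := by
  induction h with
  | thm h => exact h
  | hyp h => exact h.elim
  | mp _ _ ih1 ih2 => exact .mp ih1 ih2

theorem logic_of_canonical {A : BForm} (h : kvalid (CR (Ax := Ax)) CRD A) : Logic Ax A := by
  by_contra hn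
  obtain ⟨x, hx, -, hA⟩ := lindenbaum fun hd : Der Ax ∅ A => hn hd.of_empty
  exact hA ((truth_lemma A ⟨x, hx⟩).1 (h _ _))

end Canonical

/-- Kripke completeness of S4D, S4DS and S4DT1S with respect to
S4D-frames, DS S4D-frames, and DS T₁ S4D-frames, respectively. -/
theorem kripke_completeness (A : BForm) :
    (S4D A ↔ ∀ (W : Type) (R RD : W → W → Prop), IsS4DFrame R RD → kvalid R RD A) ∧
    (S4DS A ↔ ∀ (W : Type) (R RD : W → W → Prop), IsS4DFrame R RD → IsDSFrame R RD →
      kvalid R RD A) ∧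
    (S4DT1S A ↔ ∀ (W : Type) (R RD : W → W → Prop), IsS4DFrame R RD → IsDSFrame R RD →
      IsT1Frame R RD → kvalid R RD A) := by
  refine ⟨⟨fun h W R RD hF => ?_, fun h => ?_⟩, ⟨fun h W R RD hF hDS => ?_, fun h => ?_⟩,
    ⟨fun h W R RD hF hDS hT => ?_, fun h => ?_⟩⟩
  · exact soundness hF (fun B hB => hB.elim) h
  · exact logic_of_canonical (h _ _ _ canonical_frame)
  · refine soundness hF ?_ h
    rintro B rfl
    exact kvalid_dsAx hF hDS
  · exact logic_of_canonical (h _ _ _ canonical_frame (canonical_ds rfl))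
  · refine soundness hF ?_ h
    rintro B (rfl | rfl)
    · exact kvalid_dsAx hF hDS
    · exact kvalid_at1Ax hF hT
  · exact logic_of_canonical
      (h _ _ _ canonical_frame (canonical_ds (Or.inl rfl)) (canonical_t1 (Or.inr rfl)))
end

section
/- Finite model property of S4DT1S: for every bimodal formula A, A ∈ S4DT1S if and only if F ⊨ A for every finite S4D-frame F that is both a DS-frame and a T₁-frame. -/
namespace S4DT1SProof

open BForm

/-! ### Soundness -/

theorem ksat_conj {W : Type} {R RD : W → W → Prop} {θ : ℕ → Set W} {x : W} {A B : BForm} :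
    ksat R RD θ x (conj A B) ↔ ksat R RD θ x A ∧ ksat R RD θ x B := by
  simp only [conj, neg, ksat]
  tauto

theorem ksat_dia {W : Type} {R RD : W → W → Prop} {θ : ℕ → Set W} {x : W} {A : BForm} :
    ksat R RD θ x (dia A) ↔ ∃ y, R x y ∧ ksat R RD θ y A := by
  simp [dia, neg, ksat]

theorem ksat_ddia {W : Type} {R RD : W → W → Prop} {θ : ℕ → Set W} {x : W} {A : BForm} :
    ksat R RD θ x (ddia A) ↔ ∃ y, RD x y ∧ ksat R RD θ y A := by
  simp [ddia, neg, ksat]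

theorem ksat_subst {W : Type} (R RD : W → W → Prop) (θ : ℕ → Set W) (σ : ℕ → BForm)
    (A : BForm) (x : W) :
    ksat R RD θ x (substF σ A) ↔ ksat R RD (fun n => {y | ksat R RD θ y (σ n)}) x A := by
  induction A generalizing x with
  | var n => rfl
  | bot => rfl
  | imp A B ihA ihB => simp only [substF, ksat, ihA, ihB]
  | box A ih => simp only [substF, ksat, ih]
  | dbox A ih => simp only [substF, ksat, ih]

open Classical in
theorem ksat_taut {W : Type} (R RD : W → W → Prop) (θ : ℕ → Set W) {A : BForm}
    (h : Tautology A) (x : W) : ksat R RD θ x A := by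
  have key : ∀ B, beval (fun C => decide (ksat R RD θ x C)) B = true ↔ ksat R RD θ x B := by
    intro B
    induction B with
    | var n => simp [beval]
    | bot => simp [beval, ksat]
    | imp A B ihA ihB =>
      simp only [beval, ksat, ← ihA, ← ihB, Bool.or_eq_true, Bool.not_eq_true', imp_iff_not_or,
        Bool.not_eq_true]
    | box A ih => simp [beval]
    | dbox A ih => simp [beval]
  exact (key A).1 (h _)

theorem soundness {A : BForm} (h : S4DT1S A) {W : Type} {R RD : W → W → Prop}
    (hF : IsS4DFrame R RD) (hDS : IsDSFrame R RD) (hT : IsT1Frame R RD) : kvalid R RD A := by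
  unfold S4DT1S at h
  induction h with
  | taut h => exact fun θ x => ksat_taut R RD θ h x
  | axKBox => exact fun θ x h1 h2 y hy => h1 y hy (h2 y hy)
  | axKD => exact fun θ x h1 h2 y hy => h1 y hy (h2 y hy)
  | axBD => exact fun θ x h y hy => ksat_ddia.2 ⟨x, hF.symm hy, h⟩
  | ax4mD =>
    intro θ x h y hy z hz
    obtain ⟨h1, h2⟩ := ksat_conj.1 h
    by_cases hxz : x = z
    · exact hxz ▸ h1
    · exact h2 z (hF.ptrans hy hz hxz)
  | axTBox => exact fun θ x h => h x (hF.refl x)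
  | ax4Box => exact fun θ x h y hy z hz => h z (hF.trans hy hz)
  | axDBox =>
    intro θ x h y hy
    obtain ⟨h1, h2⟩ := ksat_conj.1 h
    rcases hF.inc hy with h | h
    · exact h1 y h
    · exact h ▸ h2
  | extra h =>
    rcases h with rfl | rfl
    · intro θ x h
      refine ksat_dia.2 ?_
      by_cases hx : RD x x
      · exact ⟨x, hF.refl x, h x hx⟩
      · obtain ⟨y, hyx, hxy⟩ := hDS x hx
        exact ⟨y, hxy, h y ((hF.inc hxy).resolve_right (Ne.symm hyx))⟩
    · intro θ x h y hy z hz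
      refine h z ?_
      by_cases hxz : x = z
      · subst hxz
        by_contra hx
        exact hx (hT x hx y hz ▸ hy)
      · rcases hF.inc hz with h' | h'
        · exact hF.ptrans hy h' hxz
        · exact h' ▸ hy
  | mp _ _ ih1 ih2 => exact fun θ x => ih1 θ x (ih2 θ x)
  | subst σ _ ih => exact fun θ x => (ksat_subst R RD θ σ _ x).2 (ih _ x)
  | necBox _ ih => exact fun θ x y _ => ih θ y
  | necD _ ih => exact fun θ x y _ => ih θ y

/-! ### Derivability from a set of assumptions -/

/-- Local derivability in `S4DT1S` from the assumptions `S`: only modus ponens may be applied to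
formulas that depend on `S`. -/
inductive Der (S : Set BForm) : BForm → Prop
  | thm {A : BForm} : S4DT1S A → Der S A
  | hyp {A : BForm} : A ∈ S → Der S A
  | mp {A B : BForm} : Der S (imp A B) → Der S A → Der S B

theorem taut_k (A B : BForm) : S4DT1S (imp A (imp B A)) :=
  Logic.taut fun v => by simp only [beval]; cases beval v A <;> cases beval v B <;> rfl

theorem taut_s (A B C : BForm) :
    S4DT1S (imp (imp A (imp B C)) (imp (imp A B) (imp A C))) :=
  Logic.taut fun v => by
    simp only [beval]; cases beval v A <;> cases beval v B <;> cases beval v C <;> rfl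

theorem taut_id (A : BForm) : S4DT1S (imp A A) :=
  Logic.taut fun v => by simp only [beval]; cases beval v A <;> rfl

theorem taut_dne (A : BForm) : S4DT1S (imp (neg (neg A)) A) :=
  Logic.taut fun v => by simp only [beval, neg]; cases beval v A <;> rfl

theorem taut_dni (A : BForm) : S4DT1S (imp A (neg (neg A))) :=
  Logic.taut fun v => by simp only [beval, neg]; cases beval v A <;> rfl

theorem taut_efq (A B : BForm) : S4DT1S (imp (neg A) (imp A B)) :=
  Logic.taut fun v => by simp only [beval, neg]; cases beval v A <;> cases beval v B <;> rfl

theorem taut_or_left (A B : BForm) : S4DT1S (imp A (imp (neg A) B)) :=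
  Logic.taut fun v => by simp only [beval, neg]; cases beval v A <;> cases beval v B <;> rfl

theorem taut_conj (A B : BForm) : S4DT1S (imp A (imp B (conj A B))) :=
  Logic.taut fun v => by simp only [beval, neg, conj]; cases beval v A <;> cases beval v B <;> rfl

theorem taut_conj_mp (A B C D : BForm) :
    S4DT1S (imp (imp C (imp A B)) (imp (imp D A) (imp (conj C D) B))) :=
  Logic.taut fun v => by
    simp only [beval, neg, conj]
    cases beval v A <;> cases beval v B <;> cases beval v C <;> cases beval v D <;> rfl

theorem Der.deduction {S : Set BForm} {A B : BForm} (h : Der (insert A S) B) :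
    Der S (imp A B) := by
  induction h with
  | thm h => exact .mp (.thm (taut_k _ _)) (.thm h)
  | hyp h =>
    rcases h with rfl | h
    · exact .thm (taut_id _)
    · exact .mp (.thm (taut_k _ _)) (.hyp h)
  | mp _ _ ih1 ih2 => exact .mp (.mp (.thm (taut_s _ _ _)) ih1) ih2

theorem Der.mono {S T : Set BForm} (hST : S ⊆ T) {A : BForm} (h : Der S A) : Der T A := by
  induction h with
  | thm h => exact .thm h
  | hyp h => exact .hyp (hST h)
  | mp _ _ ih1 ih2 => exact .mp ih1 ih2

theorem Der.of_sUnion {c : Set (Set BForm)} (hc : IsChain (· ⊆ ·) c) (hne : c.Nonempty)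
    {A : BForm} (h : Der (⋃₀ c) A) : ∃ S ∈ c, Der S A := by
  induction h with
  | thm h => obtain ⟨S, hS⟩ := hne; exact ⟨S, hS, .thm h⟩
  | hyp h => obtain ⟨S, hS, h⟩ := h; exact ⟨S, hS, .hyp h⟩
  | mp _ _ ih1 ih2 =>
    obtain ⟨S, hS, h1⟩ := ih1
    obtain ⟨T, hT, h2⟩ := ih2
    rcases hc.total hS hT with h | h
    · exact ⟨T, hT, .mp (h1.mono h) h2⟩
    · exact ⟨S, hS, .mp h1 (h2.mono h)⟩

/-- Maximal consistent sets: consistent and complete sets of formulas. -/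
def IsMCS (x : Set BForm) : Prop := ¬ Der x bot ∧ ∀ A, A ∈ x ∨ neg A ∈ x

theorem lindenbaum {S : Set BForm} (h : ¬ Der S bot) : ∃ x, S ⊆ x ∧ IsMCS x := by
  obtain ⟨x, hSx, hx⟩ := zorn_subset_nonempty {T | ¬ Der T bot} (by
    intro c hcS hc hne
    refine ⟨⋃₀ c, ?_, fun s hs => Set.subset_sUnion_of_mem hs⟩
    intro hd
    obtain ⟨T, hT, hd⟩ := Der.of_sUnion hc hne hd
    exact hcS hT hd) S h
  refine ⟨x, hSx, hx.prop, fun A => ?_⟩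
  by_contra! hA
  obtain ⟨h1, h2⟩ := hA
  have inc : ∀ B, B ∉ x → Der (insert B x) bot := by
    intro B hB
    by_contra hd
    exact hB (hx.le_of_ge hd (Set.subset_insert B x) (Set.mem_insert B x))
  exact hx.prop (.mp (inc _ h2).deduction (inc _ h1).deduction)

/-- The points of the canonical model. -/
abbrev MCS : Type := {x : Set BForm // IsMCS x}

namespace MCS

theorem mem_of_der (x : MCS) {A : BForm} (h : Der x.1 A) : A ∈ x.1 := by
  rcases x.2.2 A with hA | hA
  · exact hA
  · exact absurd (.mp (.hyp hA) h) x.2.1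

theorem mem_thm (x : MCS) {A : BForm} (h : S4DT1S A) : A ∈ x.1 := x.mem_of_der (.thm h)

theorem mem_mp (x : MCS) {A B : BForm} (h : imp A B ∈ x.1) (hA : A ∈ x.1) : B ∈ x.1 :=
  x.mem_of_der (.mp (.hyp h) (.hyp hA))

theorem mem_thm_mp (x : MCS) {A B : BForm} (h : S4DT1S (imp A B)) (hA : A ∈ x.1) : B ∈ x.1 :=
  x.mem_mp (x.mem_thm h) hA

theorem bot_notMem (x : MCS) : bot ∉ x.1 := fun h => x.2.1 (.hyp h)

theorem mem_neg (x : MCS) {A : BForm} : neg A ∈ x.1 ↔ A ∉ x.1 :=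
  ⟨fun h hA => x.bot_notMem (x.mem_mp h hA), fun h => (x.2.2 A).resolve_left h⟩

theorem mem_imp (x : MCS) {A B : BForm} : imp A B ∈ x.1 ↔ (A ∈ x.1 → B ∈ x.1) := by
  refine ⟨fun h hA => x.mem_mp h hA, fun h => ?_⟩
  by_cases hA : A ∈ x.1
  · exact x.mem_thm_mp (taut_k _ _) (h hA)
  · exact x.mem_thm_mp (taut_efq _ _) (x.mem_neg.2 hA)

theorem mem_conj (x : MCS) {A B : BForm} (hA : A ∈ x.1) (hB : B ∈ x.1) : conj A B ∈ x.1 :=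
  x.mem_mp (x.mem_thm_mp (taut_conj A B) hA) hB

/-- Maximality: inclusion between maximal consistent sets is equality. -/
theorem exists_mem_notMem {x y : MCS} (h : x ≠ y) : ∃ C, C ∈ x.1 ∧ C ∉ y.1 := by
  by_contra! hxy
  refine h (Subtype.ext (Set.Subset.antisymm hxy fun C hC => ?_))
  by_contra hCx
  exact y.mem_neg.1 (hxy _ (x.mem_neg.2 hCx)) hC

end MCS

/-! ### Instances of the axioms -/

/-- The substitution `p ↦ A`, `q ↦ B`. -/
def sub2 (A B : BForm) : ℕ → BForm
  | 0 => A
  | _ => B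

theorem inst_kBox (A B : BForm) : S4DT1S (imp (box (imp A B)) (imp (box A) (box B))) :=
  Logic.subst (sub2 A B) Logic.axKBox

theorem inst_kD (A B : BForm) : S4DT1S (imp (dbox (imp A B)) (imp (dbox A) (dbox B))) :=
  Logic.subst (sub2 A B) Logic.axKD

theorem inst_bD (A : BForm) : S4DT1S (imp A (dbox (ddia A))) :=
  Logic.subst (sub2 A A) Logic.axBD

theorem inst_4mD (A : BForm) : S4DT1S (imp (conj A (dbox A)) (dbox (dbox A))) :=
  Logic.subst (sub2 A A) Logic.ax4mD

theorem inst_tBox (A : BForm) : S4DT1S (imp (box A) A) :=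
  Logic.subst (sub2 A A) Logic.axTBox

theorem inst_4Box (A : BForm) : S4DT1S (imp (box A) (box (box A))) :=
  Logic.subst (sub2 A A) Logic.ax4Box

theorem inst_dBox (A : BForm) : S4DT1S (imp (conj (dbox A) A) (box A)) :=
  Logic.subst (sub2 A A) Logic.axDBox

theorem inst_ds (A : BForm) : S4DT1S (imp (dbox A) (dia A)) :=
  Logic.subst (sub2 A A) (Logic.extra (A := dsAx) (Or.inl rfl))

theorem inst_at1 (A : BForm) : S4DT1S (imp (dbox A) (dbox (box A))) :=
  Logic.subst (sub2 A A) (Logic.extra (A := at1Ax) (Or.inr rfl))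

/-! ### The canonical frame -/

/-- The canonical relation of `□`. -/
def canR (x y : MCS) : Prop := ∀ B, box B ∈ x.1 → B ∈ y.1

/-- The canonical relation of `[≠]`. -/
def canRD (x y : MCS) : Prop := ∀ B, dbox B ∈ x.1 → B ∈ y.1

theorem mem_box_of_thm (x : MCS) {A B : BForm} (h : S4DT1S (imp A B)) (hA : box A ∈ x.1) :
    box B ∈ x.1 :=
  x.mem_mp (x.mem_thm_mp (inst_kBox A B) (x.mem_thm (Logic.necBox h))) hA

theorem mem_dbox_of_thm (x : MCS) {A B : BForm} (h : S4DT1S (imp A B)) (hA : dbox A ∈ x.1) :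
    dbox B ∈ x.1 :=
  x.mem_mp (x.mem_thm_mp (inst_kD A B) (x.mem_thm (Logic.necD h))) hA

/-- The existence lemma, for an arbitrary normal modality `m`. -/
theorem exists_succ (m : BForm → BForm)
    (hK : ∀ A B, S4DT1S (imp (m (imp A B)) (imp (m A) (m B))))
    (hN : ∀ A, S4DT1S A → S4DT1S (m A)) (x : MCS) {A : BForm} (hA : m A ∉ x.1) :
    ∃ y : MCS, (∀ B, m B ∈ x.1 → B ∈ y.1) ∧ A ∉ y.1 := by
  have key : ∀ B, Der {C | m C ∈ x.1} B → m B ∈ x.1 := by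
    intro B hB
    induction hB with
    | thm h => exact x.mem_thm (hN _ h)
    | hyp h => exact h
    | mp _ _ ih1 ih2 => exact x.mem_mp (x.mem_thm_mp (hK _ _) ih1) ih2
  have hcons : ¬ Der (insert (neg A) {C | m C ∈ x.1}) bot := fun h =>
    hA (key A (.mp (.thm (taut_dne A)) h.deduction))
  obtain ⟨y, hy, hmcs⟩ := lindenbaum hcons
  exact ⟨⟨y, hmcs⟩, fun B hB => hy (Or.inr hB),
    (MCS.mem_neg ⟨y, hmcs⟩).1 (hy (Set.mem_insert _ _))⟩

theorem canR_refl (x : MCS) : canR x x := fun B hB => x.mem_thm_mp (inst_tBox B) hB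

theorem canR_trans {x y z : MCS} (hxy : canR x y) (hyz : canR y z) : canR x z :=
  fun B hB => hyz B (hxy _ (x.mem_thm_mp (inst_4Box B) hB))

theorem canRD_symm {x y : MCS} (h : canRD x y) : canRD y x := by
  intro B hB
  by_contra hBx
  have h1 : ddia (neg B) ∈ y.1 := h _ (x.mem_thm_mp (inst_bD (neg B)) (x.mem_neg.2 hBx))
  exact y.mem_neg.1 h1 (mem_dbox_of_thm y (taut_dni B) hB)

theorem canRD_ptrans {x y z : MCS} (hxy : canRD x y) (hyz : canRD y z) (hne : x ≠ z) :
    canRD x z := by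
  intro B hB
  obtain ⟨C, hCx, hCz⟩ := MCS.exists_mem_notMem hne
  -- Pseudo-transitivity is applied to the disjunction `C ∨ B`, which also holds at `x`.
  have h1 : imp (neg C) B ∈ x.1 := x.mem_thm_mp (taut_or_left C B) hCx
  have h2 : dbox (imp (neg C) B) ∈ x.1 := mem_dbox_of_thm x (taut_k B (neg C)) hB
  have h3 := x.mem_thm_mp (inst_4mD _) (x.mem_conj h1 h2)
  exact z.mem_mp (hyz _ (hxy _ h3)) (z.mem_neg.2 hCz)

theorem canR_inc {x y : MCS} (hxy : canR x y) (hne : x ≠ y) : canRD x y := by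
  intro B hB
  obtain ⟨C, hCx, hCy⟩ := MCS.exists_mem_notMem hne
  have h1 : imp (neg C) B ∈ x.1 := x.mem_thm_mp (taut_or_left C B) hCx
  have h2 : dbox (imp (neg C) B) ∈ x.1 := mem_dbox_of_thm x (taut_k B (neg C)) hB
  have h3 := x.mem_thm_mp (inst_dBox _) (x.mem_conj h2 h1)
  exact y.mem_mp (hxy _ h3) (y.mem_neg.2 hCy)

theorem canRD_of_canRD_canR {x y z : MCS} (hxy : canRD x y) (hyz : canR y z) : canRD x z :=
  fun B hB => hyz B (hxy _ (x.mem_thm_mp (inst_at1 B) hB))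

theorem canR_serial (x : MCS) : ∃ y, canRD x y ∧ canR x y := by
  have key : ∀ A, Der ({B | dbox B ∈ x.1} ∪ {B | box B ∈ x.1}) A →
      ∃ C, box C ∈ x.1 ∧ dbox (imp C A) ∈ x.1 := by
    intro A hA
    have htop : box (imp bot bot) ∈ x.1 := x.mem_thm (Logic.necBox (taut_id bot))
    induction hA with
    | thm h => exact ⟨_, htop, mem_dbox_of_thm x (taut_k _ _) (x.mem_thm (Logic.necD h))⟩
    | hyp h =>
      rcases h with h | h
      · exact ⟨_, htop, mem_dbox_of_thm x (taut_k _ _) h⟩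
      · exact ⟨_, h, x.mem_thm (Logic.necD (taut_id _))⟩
    | @mp A B _ _ ih1 ih2 =>
      obtain ⟨C, hC, h1⟩ := ih1
      obtain ⟨D, hD, h2⟩ := ih2
      refine ⟨conj C D, ?_, ?_⟩
      · exact x.mem_mp (x.mem_thm_mp (inst_kBox _ _) (mem_box_of_thm x (taut_conj C D) hC)) hD
      · exact x.mem_mp (x.mem_thm_mp (inst_kD _ _)
          (mem_dbox_of_thm x (taut_conj_mp A B C D) h1)) h2
  have hcons : ¬ Der ({B | dbox B ∈ x.1} ∪ {B | box B ∈ x.1}) bot := by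
    intro h
    obtain ⟨C, hC, hD⟩ := key bot h
    have h1 : dia (neg C) ∈ x.1 := x.mem_thm_mp (inst_ds (neg C)) hD
    exact x.mem_neg.1 h1 (mem_box_of_thm x (taut_dni C) hC)
  obtain ⟨y, hy, hmcs⟩ := lindenbaum hcons
  exact ⟨⟨y, hmcs⟩, fun B hB => hy (Or.inl hB), fun B hB => hy (Or.inr hB)⟩

/-! ### The component of a point in the canonical model -/

/-- The `R_D`-component of `r` in the canonical frame. -/
abbrev Comp (r : MCS) : Type := {y : MCS // r = y ∨ canRD r y}

theorem comp_closed_canRD {r x y : MCS} (hx : r = x ∨ canRD r x) (h : canRD x y) :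
    r = y ∨ canRD r y := by
  rcases hx with rfl | hx
  · exact Or.inr h
  · by_cases hry : r = y
    · exact Or.inl hry
    · exact Or.inr (canRD_ptrans hx h hry)

theorem comp_closed_canR {r x y : MCS} (hx : r = x ∨ canRD r x) (h : canR x y) :
    r = y ∨ canRD r y := by
  by_cases hxy : x = y
  · exact hxy ▸ hx
  · exact comp_closed_canRD hx (canR_inc h hxy)

theorem comp_connected {r : MCS} (x y : Comp r) (hne : x ≠ y) : canRD x.1 y.1 := by
  have hne' : x.1 ≠ y.1 := fun h => hne (Subtype.ext h)
  rcases x.2 with hx | hx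
  · rcases y.2 with hy | hy
    · exact absurd (hx.symm.trans hy) hne'
    · exact hx ▸ hy
  · rcases y.2 with hy | hy
    · exact hy ▸ canRD_symm hx
    · exact canRD_ptrans (canRD_symm hx) hy hne'

theorem truth {r : MCS} (A : BForm) (x : Comp r) :
    ksat (fun x y : Comp r => canR x.1 y.1) (fun x y => canRD x.1 y.1)
      (fun n => {x | var n ∈ x.1.1}) x A ↔ A ∈ x.1.1 := by
  induction A generalizing x with
  | var n => rfl
  | bot => exact ⟨False.elim, x.1.bot_notMem⟩
  | imp A B ihA ihB => simp only [ksat, ihA, ihB, MCS.mem_imp]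
  | box A ih =>
    simp only [ksat, ih]
    refine ⟨fun h => ?_, fun h y hy => hy A h⟩
    by_contra hA
    obtain ⟨y, hy, hAy⟩ := exists_succ box inst_kBox (fun _ => Logic.necBox) x.1 hA
    exact hAy (h ⟨y, comp_closed_canR x.2 hy⟩ hy)
  | dbox A ih =>
    simp only [ksat, ih]
    refine ⟨fun h => ?_, fun h y hy => hy A h⟩
    by_contra hA
    obtain ⟨y, hy, hAy⟩ := exists_succ dbox inst_kD (fun _ => Logic.necD) x.1 hA
    exact hAy (h ⟨y, comp_closed_canRD x.2 hy⟩ hy)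

/-! ### Filtration -/

/-- The set of subformulas of a formula. -/
def subs : BForm → Set BForm
  | .var n => {.var n}
  | .bot => {.bot}
  | .imp A B => insert (.imp A B) (subs A ∪ subs B)
  | .box A => insert (.box A) (subs A)
  | .dbox A => insert (.dbox A) (subs A)

theorem subs_finite (A : BForm) : (subs A).Finite := by
  induction A with
  | var n => exact Set.finite_singleton _
  | bot => exact Set.finite_singleton _
  | imp A B ihA ihB => exact (ihA.union ihB).insert _
  | box A ih => exact ih.insert _
  | dbox A ih => exact ih.insert _

theorem mem_subs_self (A : BForm) : A ∈ subs A := by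
  cases A <;> simp [subs]

/-- Filtration of a model on an `R_D`-connected frame satisfying the first-order correspondents
of the axioms: a formula refuted there is refuted on a finite S4D-frame that is both a DS-frame
and a T₁-frame. -/
theorem filtration {W : Type} (R RD : W → W → Prop) (hrefl : ∀ x, R x x)
    (htrans : ∀ x y z, R x y → R y z → R x z) (hsymm : ∀ x y, RD x y → RD y x)
    (hconn : ∀ x y, x ≠ y → RD x y) (hDS : ∀ x, ∃ y, RD x y ∧ R x y)
    (hT1 : ∀ x y z, RD x y → R y z → RD x z)
    (θ : ℕ → Set W) (A : BForm) (r : W) (hr : ¬ ksat R RD θ r A) :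
    ∃ (W' : Type) (R' RD' : W' → W' → Prop), Finite W' ∧ IsS4DFrame R' RD' ∧
      IsDSFrame R' RD' ∧ IsT1Frame R' RD' ∧ ¬ kvalid R' RD' A := by
  let f : W → Set (subs A) := fun x => {B | ksat R RD θ x B.1}
  let g : W → Set.range f := Set.rangeFactorization f
  have hg : ∀ a, ∃ x, g x = a := Set.rangeFactorization_surjective
  have hgsat : ∀ {x y}, g x = g y → ∀ B ∈ subs A, (ksat R RD θ x B ↔ ksat R RD θ y B) := by
    intro x y h B hB
    have h' : f x = f y := congrArg Subtype.val h
    exact (Set.ext_iff.1 h') ⟨B, hB⟩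
  let R₀ : Set.range f → Set.range f → Prop := fun a b => ∃ x y, g x = a ∧ g y = b ∧ R x y
  let RD' : Set.range f → Set.range f → Prop := fun a b => ∃ x y, g x = a ∧ g y = b ∧ RD x y
  have hconn' : ∀ a b, a ≠ b → RD' a b := by
    intro a b hab
    obtain ⟨x, rfl⟩ := hg a
    obtain ⟨y, rfl⟩ := hg b
    exact ⟨x, y, rfl, rfl, hconn x y fun h => hab (h ▸ rfl)⟩
  -- An irreflexive class is a singleton.
  have hsingle : ∀ x, ¬ RD' (g x) (g x) → ∀ y, g y = g x → y = x := by
    intro x hx y hy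
    by_contra hne
    exact hx ⟨y, x, hy, rfl, hconn y x hne⟩
  refine ⟨Set.range f, Relation.ReflTransGen R₀, RD', ?_, ?_, ?_, ?_, ?_⟩
  · have : Finite (subs A) := subs_finite A
    infer_instance
  · refine ⟨fun _ => .refl, fun _ _ _ => .trans, ?_, fun a _ c _ _ h => hconn' a c h, ?_⟩
    · rintro a b ⟨x, y, hx, hy, h⟩
      exact ⟨y, x, hy, hx, hsymm x y h⟩
    · intro a b _
      by_cases hab : a = b
      · exact Or.inr hab
      · exact Or.inl (hconn' a b hab)
  · intro a ha
    obtain ⟨x, rfl⟩ := hg a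
    obtain ⟨y, hD, hxy⟩ := hDS x
    refine ⟨g y, fun h => ?_, .single ⟨x, y, rfl, rfl, hxy⟩⟩
    exact ha ⟨x, y, rfl, h, hD⟩
  · intro a ha
    obtain ⟨x, rfl⟩ := hg a
    have step : ∀ b, R₀ b (g x) → b = g x := by
      rintro b ⟨y, z, rfl, hz, hyz⟩
      obtain rfl := hsingle x ha z hz
      by_contra hne
      exact ha ⟨z, z, rfl, rfl, hT1 z y z (hconn z y fun h => hne (h ▸ rfl)) hyz⟩
    intro b hb
    induction hb using Relation.ReflTransGen.head_induction_on with
    | refl => rfl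
    | head h _ ih => exact step _ (ih ▸ h)
  · let θ' : ℕ → Set (Set.range f) := fun n => {a | ∃ x, g x = a ∧ x ∈ θ n}
    have key : ∀ B, subs B ⊆ subs A → ∀ x,
        (ksat (Relation.ReflTransGen R₀) RD' θ' (g x) B ↔ ksat R RD θ x B) := by
      intro B
      induction B with
      | var n =>
        intro hB x
        exact ⟨fun ⟨y, hy, h⟩ => (hgsat hy _ (hB (mem_subs_self _))).1 h, fun h => ⟨x, rfl, h⟩⟩
      | bot => exact fun _ _ => Iff.rfl
      | imp B C ihB ihC =>
        intro hB x
        have h1 := ihB (fun D hD => hB (Or.inr (Or.inl hD))) x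
        have h2 := ihC (fun D hD => hB (Or.inr (Or.inr hD))) x
        simp only [ksat, h1, h2]
      | box B ih =>
        intro hB x
        have ih' := ih (fun D hD => hB (Or.inr hD))
        have hmem := hB (mem_subs_self _)
        constructor
        · exact fun h y hy => (ih' y).1 (h (g y) (.single ⟨x, y, rfl, rfl, hy⟩))
        · intro h b hb
          -- Truth of `□B` propagates along each step of a chain.
          have hall : ∀ y, g y = b → ksat R RD θ y (box B) := by
            induction hb with
            | refl => exact fun y hy => (hgsat hy _ hmem).2 h
            | tail _ hbc ihb =>
              obtain ⟨u, v, hu, hv, huv⟩ := hbc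
              intro y hy
              exact (hgsat (hy.trans hv.symm) _ hmem).2
                fun z hz => ihb u hu z (htrans _ _ _ huv hz)
          obtain ⟨y, rfl⟩ := hg b
          exact (ih' y).2 (hall y rfl y (hrefl y))
      | dbox B ih =>
        intro hB x
        have ih' := ih (fun D hD => hB (Or.inr hD))
        have hmem := hB (mem_subs_self _)
        constructor
        · exact fun h y hy => (ih' y).1 (h (g y) ⟨x, y, rfl, rfl, hy⟩)
        · rintro h b ⟨u, v, hu, rfl, huv⟩
          exact (ih' v).2 ((hgsat hu _ hmem).2 h v huv)
    exact fun hval => hr ((key A subset_rfl r).1 (hval θ' (g r)))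

theorem completeness {A : BForm} (hA : ¬ S4DT1S A) :
    ∃ (W : Type) (R RD : W → W → Prop), Finite W ∧ IsS4DFrame R RD ∧
      IsDSFrame R RD ∧ IsT1Frame R RD ∧ ¬ kvalid R RD A := by
  have hthm : ∀ B, Der ∅ B → S4DT1S B := by
    intro B hB
    induction hB with
    | thm h => exact h
    | hyp h => exact h.elim
    | mp _ _ ih1 ih2 => exact Logic.mp ih1 ih2
  have hcons : ¬ Der (insert (neg A) ∅) bot := fun h =>
    hA (hthm _ (.mp (.thm (taut_dne A)) h.deduction))
  obtain ⟨s, hs, hmcs⟩ := lindenbaum hcons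
  let r : MCS := ⟨s, hmcs⟩
  have hr : A ∉ r.1 := r.mem_neg.1 (hs (Set.mem_insert _ _))
  refine filtration (fun x y : Comp r => canR x.1 y.1) (fun x y => canRD x.1 y.1)
    (fun x => canR_refl x.1) (fun _ _ _ => canR_trans) (fun _ _ => canRD_symm) comp_connected
    (fun x => ?_) (fun _ _ _ => canRD_of_canRD_canR) (fun n => {x | var n ∈ x.1.1}) A
    ⟨r, Or.inl rfl⟩ fun h => hr ((truth A _).1 h)
  obtain ⟨y, hD, hR⟩ := canR_serial x.1
  exact ⟨⟨y, comp_closed_canRD x.2 hD⟩, hD, hR⟩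

end S4DT1SProof

/-- finite model property of S4DT1S: `A ∈ S4DT1S` iff `A` is valid in
every finite S4D-frame that is both a DS-frame and a T₁-frame. -/
theorem s4dt1s_fmp (A : BForm) :
    S4DT1S A ↔ ∀ (W : Type) (R RD : W → W → Prop), Finite W → IsS4DFrame R RD →
      IsDSFrame R RD → IsT1Frame R RD → kvalid R RD A := by
  constructor
  · exact fun h W R RD _ hF hDS hT => S4DT1SProof.soundness h hF hDS hT
  · intro h
    by_contra hA
    obtain ⟨W, R, RD, hfin, hF, hDS, hT, hval⟩ := S4DT1SProof.completeness hA
    exact hval (h W R RD hfin hF hDS hT)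
end

section
/- If F = (W, R, R_D) is a finite Kripke frame, X is a topological space, and f : X → W is a cd-p-morphism from X onto F, then every bimodal formula valid in X (under topological semantics) is valid in F (under Kripke semantics). -/
/-- Every point `x` has a neighbourhood that `f` maps into the `R`-successors of `f x`. This is where
finiteness of the frame is needed. -/
theorem IsCdPMorphism.exists_isOpen {X : Type} [TopologicalSpace X] {W : Type} [Finite W]
    {R RD : W → W → Prop} {f : X → W} (hf : IsCdPMorphism R RD f) (x : X) :
    ∃ U : Set X, IsOpen U ∧ x ∈ U ∧ ∀ y ∈ U, R (f x) (f y) := by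
  refine ⟨(⋃ w ∈ {w | ¬ R (f x) w}, closure (f ⁻¹' {w}))ᶜ, ?_, ?_, ?_⟩
  · exact ((Set.toFinite _).isClosed_biUnion fun _ _ => isClosed_closure).isOpen_compl
  · simp [hf.cl]
  · intro y hy
    by_contra h
    exact hy (Set.mem_biUnion (x := f y) h (subset_closure rfl))

theorem tsat_preimage_iff_ksat {X : Type} [TopologicalSpace X] {W : Type} [Finite W]
    {R RD : W → W → Prop} {f : X → W} (hf : IsCdPMorphism R RD f) (θ : ℕ → Set W)
    (A : BForm) (x : X) : tsat (fun n => f ⁻¹' θ n) x A ↔ ksat R RD θ (f x) A := by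
  induction A generalizing x with
  | var n => rfl
  | bot => rfl
  | imp A B ihA ihB => simp only [tsat, ksat, ihA, ihB]
  | box A ih =>
    simp only [tsat, ksat, ih]
    constructor
    · rintro ⟨U, hU, hxU, h⟩ w hw
      have hx : x ∈ closure (f ⁻¹' {w}) := by rw [hf.cl]; exact hw
      obtain ⟨y, hyU, rfl⟩ := mem_closure_iff.1 hx U hU hxU
      exact h y hyU
    · intro h
      obtain ⟨U, hU, hxU, hR⟩ := hf.exists_isOpen x
      exact ⟨U, hU, hxU, fun y hy => h _ (hR y hy)⟩
  | dbox A ih =>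
    simp only [tsat, ksat, ih]
    have hD (w : W) : (∃ y, y ≠ x ∧ f y = w) ↔ RD (f x) w := Set.ext_iff.1 (hf.diff w) x
    constructor
    · intro h w hw
      obtain ⟨y, hy, rfl⟩ := (hD w).2 hw
      exact h y hy
    · exact fun h y hy => h _ ((hD _).1 ⟨y, hy, rfl⟩)

/-- a cd-p-morphism from a topological space `X` onto a finite Kripke
frame `F` transfers validity: every formula valid in `X` is valid in `F`. -/
theorem cd_p_morphism_transfers_validity {X : Type} [TopologicalSpace X]
    {W : Type} [Finite W] (R RD : W → W → Prop) (f : X → W)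
    (hf : IsCdPMorphism R RD f) :
    ∀ A : BForm, tvalid X A → kvalid R RD A := by
  intro A hA θ w
  obtain ⟨x, rfl⟩ := hf.surj w
  exact (tsat_preimage_iff_ksat hf θ A x).1 (hA _ x)
end

section
/- Let F = (W, R, R_D) be an S4D-frame such that R_D ∪ Id_W = W × W (every two distinct points are R_D-related). Then there exists an S4D-frame F' = (W', R', R_D') in which R_D' is exactly the inequality relation on W' (x'R_D'y' iff x' ≠ y'), together with a p-morphism from F' onto F. -/
/-- every S4D-frame in which `R_D ∪ Id` is universal is a p-morphic
image of an S4D-frame whose difference relation is actual inequality. -/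
theorem unfold_to_inequality_frame {W : Type} (R RD : W → W → Prop)
    (hF : IsS4DFrame R RD) (huniv : ∀ x y : W, x ≠ y → RD x y) :
    ∃ (W' : Type) (R' RD' : W' → W' → Prop) (f : W' → W),
      IsS4DFrame R' RD' ∧ (∀ x y : W', RD' x y ↔ x ≠ y) ∧
      IsPMorphism R' RD' R RD f := by
  refine ⟨{p : W × Bool // p.2 = true → RD p.1 p.1}, fun a b => R a.1.1 b.1.1,
    fun a b => a ≠ b, fun a => a.1.1, ?_, fun _ _ => Iff.rfl, ?_⟩
  · exact
      { refl := fun a => hF.refl _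
        trans := fun a b c hab hbc => hF.trans hab hbc
        symm := fun a b h => h.symm
        ptrans := fun a b c _ _ h => h
        inc := fun a b _ => ne_or_eq a b }
  · refine
      { surj := fun w => ⟨⟨(w, false), by simp⟩, rfl⟩
        forth := fun a b h => h
        forthD := ?_
        back := fun a z h => ⟨⟨(z, false), by simp⟩, h, rfl⟩
        backD := ?_ }
    · rintro ⟨⟨x, i⟩, hi⟩ ⟨⟨y, j⟩, hj⟩ hne
      by_cases hxy : x = y
      · subst hxy
        -- Distinct copies of one point: the second copy exists only if `RD x x`.
        cases i <;> cases j <;> simp_all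
      · exact huniv x y hxy
    · rintro ⟨⟨x, i⟩, hi⟩ z hz
      by_cases hxz : x = z
      · subst hxz
        -- The witness is the other copy of `x`, present because `RD x x`.
        refine ⟨⟨(x, !i), fun _ => hz⟩, ?_, rfl⟩
        cases i <;> simp
      · refine ⟨⟨(z, false), by simp⟩, ?_, rfl⟩
        simp [hxz]
end
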